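/- arXiv:2204.01277 — 7 statements merged into one kernel-verified Lean document; each statement's English description precedes it below -/
import Mathlib

section
/- For every irrational real number θ, the set S_θ is infinite (so that its elements can be enumerated in increasing order as q_0 = 1 < q_1 < q_2 < …). -/
/-- For an irrational `θ`, `Sθ θ` is the set of positive integers `q` such that
`⌈qθ⌉/q < ⌈q'θ⌉/q'` for every positive integer `q' < q`. -/
def Sθ (θ : ℝ) : Set ℕ :=
  {q | 0 < q ∧ ∀ q' : ℕ, 0 < q' → q' < q →
    (⌈(q : ℝ) * θ⌉ : ℝ) / (q : ℝ) < (⌈(q' : ℝ) * θ⌉ : ℝ) / (q' : ℝ)}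

/-!
The elements of `Sθ θ` are the positions at which the sequence `⌈qθ⌉/q` drops strictly below all
of its earlier values. For irrational `θ` this sequence stays strictly above `θ` but comes
arbitrarily close to it, so it has no least value. The first position at which it falls below the
smallest of finitely many record values is a further record, so the records are infinite in number.
-/

section StrictRecordLows

variable {ι α : Type*} [Preorder ι]

/-- The strict record lows of `f` along `s`: the indices in `s` at which `f` is strictly smaller
than at all earlier indices in `s`. -/
def strictRecordLows [LT α] (f : ι → α) (s : Set ι) : Set ι :=
  {i | i ∈ s ∧ ∀ j, j ∈ s → j < i → f i < f j}

variable [WellFoundedLT ι] [LinearOrder α] {f : ι → α} {s : Set ι}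

theorem exists_mem_strictRecordLows_lt {c : α} (h : ∃ i ∈ s, f i < c) :
    ∃ i ∈ strictRecordLows f s, f i < c := by
  obtain ⟨i, ⟨his, hic⟩, hi_first⟩ := WellFounded.has_min wellFounded_lt {i | i ∈ s ∧ f i < c} h
  exact ⟨i, ⟨his, fun j hjs hji ↦ hic.trans_le (not_lt.1 fun hjc ↦ hi_first j ⟨hjs, hjc⟩ hji)⟩, hic⟩

theorem strictRecordLows_infinite (hs : s.Nonempty) (hf : ∀ i ∈ s, ∃ j ∈ s, f j < f i) :
    (strictRecordLows f s).Infinite := by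
  intro hfin
  obtain ⟨i₀, hi₀⟩ := hs
  obtain ⟨r₀, hr₀, -⟩ := exists_mem_strictRecordLows_lt (hf i₀ hi₀)
  obtain ⟨r, hr, hr_min⟩ := Set.exists_min_image _ f hfin ⟨r₀, hr₀⟩
  obtain ⟨r', hr', hlt⟩ := exists_mem_strictRecordLows_lt (hf r hr.1)
  exact (hr_min r' hr').not_gt hlt

end StrictRecordLows

section CeilDiv

theorem lt_ceil_natCast_mul_div {θ : ℝ} (hθ : Irrational θ) {q : ℕ} (hq : 0 < q) :
    θ < (⌈(q : ℝ) * θ⌉ : ℝ) / q := by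
  rw [lt_div_iff₀' (Nat.cast_pos.2 hq)]
  exact (Int.le_ceil _).lt_of_ne ((hθ.natCast_mul hq.ne').ne_int _)

variable {K : Type*} [Field K] [LinearOrder K] [IsStrictOrderedRing K] [FloorRing K]

theorem ceil_natCast_mul_div_lt_add_one_div (x : K) {q : ℕ} (hq : 0 < q) :
    (⌈(q : K) * x⌉ : K) / q < x + 1 / q := by
  have hq' : (0 : K) < q := Nat.cast_pos.2 hq
  rw [div_lt_iff₀' hq', mul_add, mul_one_div_cancel hq'.ne']
  exact Int.ceil_lt_add_one _

theorem exists_ceil_natCast_mul_div_lt {x c : K} (hxc : x < c) :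
    ∃ q : ℕ, 0 < q ∧ (⌈(q : K) * x⌉ : K) / q < c := by
  have := FloorRing.archimedean K
  obtain ⟨n, hn⟩ := exists_nat_one_div_lt (sub_pos.2 hxc)
  refine ⟨n + 1, n.succ_pos, ?_⟩
  calc (⌈((n + 1 : ℕ) : K) * x⌉ : K) / (n + 1 : ℕ)
      < x + 1 / (n + 1 : ℕ) := ceil_natCast_mul_div_lt_add_one_div x n.succ_pos
    _ < c := by rw [Nat.cast_succ]; exact lt_sub_iff_add_lt'.1 hn

end CeilDiv

theorem Sθ_eq_strictRecordLows (θ : ℝ) :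
    Sθ θ = strictRecordLows (fun q : ℕ ↦ (⌈(q : ℝ) * θ⌉ : ℝ) / q) (Set.Ioi 0) :=
  rfl

/-- For every irrational real number `θ`, the set `S_θ` is infinite. -/
theorem Sθ_infinite (θ : ℝ) (hθ : Irrational θ) : (Sθ θ).Infinite := by
  rw [Sθ_eq_strictRecordLows]
  refine strictRecordLows_infinite Set.nonempty_Ioi fun q hq ↦ ?_
  have above : θ < (⌈(q : ℝ) * θ⌉ : ℝ) / q := lt_ceil_natCast_mul_div hθ hq
  exact exists_ceil_natCast_mul_div_lt above
end

section
/- For every irrational real number θ, the gaps between consecutive elements of S_θ are nondecreasing: if q < q' are consecutive elements of S_θ and q' < q'' are consecutive elements of S_θ, then q' − q ≤ q'' − q'. -/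
/-- `q < q'` are consecutive elements of `Sθ θ`: both lie in `Sθ θ` and no element of
`Sθ θ` lies strictly between them. -/
def SθConsec (θ : ℝ) (q q' : ℕ) : Prop :=
  q ∈ Sθ θ ∧ q' ∈ Sθ θ ∧ q < q' ∧ ∀ r ∈ Sθ θ, ¬(q < r ∧ r < q')

/-!
Put `δ q = ⌈qθ⌉ - qθ`, so that `⌈qθ⌉/q = θ + δ q / q`. If `q = a + d` lies in `S_θ`, then `⌈qθ⌉/q`
is smaller than both `⌈aθ⌉/a` and `⌈dθ⌉/d`, hence smaller than their mediant, and so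
`⌈qθ⌉ ≤ ⌈aθ⌉ + ⌈dθ⌉ - 1`, which gives `δ q < δ a`. Thus `S_θ` consists of the indices of the record
minima of `δ`. If `q < q' < q''` are records, then `δ q + δ q'' - δ q'` lies in `[0, δ q)` and is
therefore the value of `δ` at `q + (q'' - q')`, so that the record following `q` comes no later than
`q + (q'' - q')`.
-/

/-- The error `⌈qθ⌉ - qθ ∈ [0, 1)` of the least upper approximation of `θ` with denominator `q`,
scaled by `q`. -/
noncomputable def upperError (θ : ℝ) (q : ℕ) : ℝ :=
  ⌈(q : ℝ) * θ⌉ - q * θ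

section

variable {θ : ℝ} {a b d q r : ℕ}

lemma upperError_nonneg (θ : ℝ) (q : ℕ) : 0 ≤ upperError θ q :=
  sub_nonneg.2 (Int.le_ceil _)

lemma upperError_le_of_le {p : ℤ} (h : (q : ℝ) * θ ≤ p) : upperError θ q ≤ p - q * θ :=
  sub_le_sub_right (Int.cast_le.2 (Int.ceil_le.2 h)) _

lemma upperError_add_sub_le (hab : a ≤ b) (h : upperError θ a ≤ upperError θ q + upperError θ b) :
    upperError θ (q + (b - a)) ≤ upperError θ q + upperError θ b - upperError θ a := by
  have hcast : ((q + (b - a) : ℕ) : ℝ) = q + (b - a) := by rw [Nat.cast_add, Nat.cast_sub hab]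
  have hle : ((q + (b - a) : ℕ) : ℝ) * θ ≤
      (⌈(q : ℝ) * θ⌉ + ⌈(b : ℝ) * θ⌉ - ⌈(a : ℝ) * θ⌉ : ℤ) := by
    unfold upperError at h
    rw [hcast]
    push_cast
    linarith
  calc upperError θ (q + (b - a))
      ≤ (⌈(q : ℝ) * θ⌉ + ⌈(b : ℝ) * θ⌉ - ⌈(a : ℝ) * θ⌉ : ℤ) - ((q + (b - a) : ℕ) : ℝ) * θ :=
        upperError_le_of_le hle
    _ = upperError θ q + upperError θ b - upperError θ a := by
        unfold upperError
        rw [hcast]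
        push_cast
        ring

lemma ceil_div_eq_add_upperError_div (hq : 0 < q) :
    (⌈(q : ℝ) * θ⌉ : ℝ) / q = θ + upperError θ q / q := by
  unfold upperError
  field_simp
  ring

lemma ceil_lt_ceil_add_ceil_of_add_mem_Sθ (ha : 0 < a) (hd : 0 < d) (h : a + d ∈ Sθ θ) :
    ⌈((a + d : ℕ) : ℝ) * θ⌉ < ⌈(a : ℝ) * θ⌉ + ⌈(d : ℝ) * θ⌉ := by
  have ha' : (0 : ℝ) < a := Nat.cast_pos.2 ha
  have hd' : (0 : ℝ) < d := Nat.cast_pos.2 hd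
  have hs : (0 : ℝ) < (a + d : ℕ) := Nat.cast_pos.2 h.1
  have hlt_a := (lt_div_iff₀ ha').1 (h.2 a ha (by omega))
  have hlt_d := (lt_div_iff₀ hd').1 (h.2 d hd (by omega))
  have hmediant : (⌈((a + d : ℕ) : ℝ) * θ⌉ : ℝ) < ⌈(a : ℝ) * θ⌉ + ⌈(d : ℝ) * θ⌉ := by
    calc (⌈((a + d : ℕ) : ℝ) * θ⌉ : ℝ)
        = ⌈((a + d : ℕ) : ℝ) * θ⌉ / (a + d : ℕ) * (a + d : ℕ) := (div_mul_cancel₀ _ hs.ne').symm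
      _ = ⌈((a + d : ℕ) : ℝ) * θ⌉ / (a + d : ℕ) * a +
            ⌈((a + d : ℕ) : ℝ) * θ⌉ / (a + d : ℕ) * d := by
          rw [← mul_add, ← Nat.cast_add]
      _ < ⌈(a : ℝ) * θ⌉ + ⌈(d : ℝ) * θ⌉ := add_lt_add hlt_a hlt_d
  exact_mod_cast hmediant

lemma upperError_lt_of_mem_Sθ (hq : q ∈ Sθ θ) (ha : 0 < a) (haq : a < q) :
    upperError θ q < upperError θ a := by
  obtain ⟨d, rfl⟩ := Nat.exists_eq_add_of_le haq.le
  have hmediant : (⌈((a + d : ℕ) : ℝ) * θ⌉ : ℝ) + 1 ≤ ⌈(a : ℝ) * θ⌉ + ⌈(d : ℝ) * θ⌉ := by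
    exact_mod_cast ceil_lt_ceil_add_ceil_of_add_mem_Sθ ha (by omega) hq
  have hceil : (⌈(d : ℝ) * θ⌉ : ℝ) < d * θ + 1 := Int.ceil_lt_add_one _
  have hsplit : ((a + d : ℕ) : ℝ) * θ = a * θ + d * θ := by rw [Nat.cast_add, add_mul]
  unfold upperError
  linarith

lemma mem_Sθ_iff_upperError :
    q ∈ Sθ θ ↔ 0 < q ∧ ∀ a : ℕ, 0 < a → a < q → upperError θ q < upperError θ a := by
  refine ⟨fun hq ↦ ⟨hq.1, fun a ↦ upperError_lt_of_mem_Sθ hq⟩, fun ⟨hq, hmin⟩ ↦ ⟨hq, ?_⟩⟩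
  intro a ha haq
  rw [ceil_div_eq_add_upperError_div hq, ceil_div_eq_add_upperError_div ha]
  have hdiv : upperError θ q / q < upperError θ a / a :=
    div_lt_div₀ (hmin a ha haq) (Nat.cast_le.2 haq.le) (upperError_nonneg θ a) (Nat.cast_pos.2 ha)
  linarith

lemma exists_mem_Sθ_of_upperError_lt (hq : q ∈ Sθ θ) (hr : 0 < r)
    (h : upperError θ r < upperError θ q) : ∃ m ∈ Sθ θ, q < m ∧ m ≤ r := by
  classical
  have hex : ∃ m, 0 < m ∧ upperError θ m < upperError θ q := ⟨r, hr, h⟩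
  obtain ⟨hpos, hlt⟩ := Nat.find_spec hex
  refine ⟨Nat.find hex, mem_Sθ_iff_upperError.2 ⟨hpos, fun a ha ham ↦ ?_⟩, ?_,
    Nat.find_min' hex ⟨hr, h⟩⟩
  · exact hlt.trans_le (not_lt.1 fun hlt_a ↦ Nat.find_min hex ham ⟨ha, hlt_a⟩)
  · by_contra! hle
    rcases hle.eq_or_lt with heq | hmq
    · exact (heq ▸ hlt).false
    · exact hlt.not_gt (upperError_lt_of_mem_Sθ hq hpos hmq)

end

theorem Sθ_gaps_monotone_general (θ : ℝ) (q q' q'' : ℕ) (h : SθConsec θ q q')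
    (hq'' : q'' ∈ Sθ θ) (hlt' : q' < q'') : q' - q ≤ q'' - q' := by
  obtain ⟨hq, hq', hlt, hnone⟩ := h
  have herr : upperError θ q' < upperError θ q := upperError_lt_of_mem_Sθ hq' hq.1 hlt
  have herr' : upperError θ q'' < upperError θ q' := upperError_lt_of_mem_Sθ hq'' hq'.1 hlt'
  have hshift : upperError θ (q + (q'' - q')) < upperError θ q := by
    have hle := upperError_add_sub_le (q := q) hlt'.le
      (by linarith [upperError_nonneg θ q''] : upperError θ q' ≤ upperError θ q + upperError θ q'')
    linarith
  obtain ⟨m, hm, hqm, hmle⟩ := exists_mem_Sθ_of_upperError_lt hq (Nat.add_pos_left hq.1 _) hshift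
  have hq'm : q' ≤ m := not_lt.1 fun hmq' ↦ hnone m hm ⟨hqm, hmq'⟩
  omega

/-- The gaps between consecutive elements of `S_θ` are nondecreasing. -/
theorem Sθ_gaps_monotone (θ : ℝ) (hθ : Irrational θ) (q q' q'' : ℕ)
    (h1 : SθConsec θ q q') (h2 : SθConsec θ q' q'') :
    q' - q ≤ q'' - q' :=
  Sθ_gaps_monotone_general θ q q' q'' h1 h2.2.1 h2.2.2.1
end

section
/- For every irrational real number θ and every pair of consecutive elements q < q' of S_θ, the difference q' − q is an element of S_{−θ}. -/
/-!
Put `p = ⌈qθ⌉` and `p' = ⌈q'θ⌉`. Until the next record `q'`, the slope `p / q` is minimal among the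
lattice points on or above the line `y = θx`: every such point `(k, a)` with `0 < k < q'` satisfies
`p * k ≤ a * q`. On the other hand `D = p * q' - p' * q` is positive. The vector
`(q' - q, p' - p)` therefore lies strictly below the line, so `⌈(q' - q)(-θ)⌉ = p - p'`.
For `0 < k < q' - q` and `s = ⌈k(-θ)⌉`, the point `(q' - k, p' + s)` lies on or above the line,
and minimality applied to it gives `D ≤ s * q + p * k`. Since `q * (p - p') = D - p * (q' - q)`,
dividing by `k` and comparing `D / k` with the smaller `D / (q' - q)` yields
`(p - p') / (q' - q) < s / k`.
-/

section Records

variable {ι α : Type*}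

/-- The strict record minima of `f` along `s`: the indices in `s` at which `f` is strictly smaller
than at every earlier index in `s`. The set `Sθ θ` is of this form. -/
def strictRecords [LT ι] [LT α] (f : ι → α) (s : Set ι) : Set ι :=
  {i | i ∈ s ∧ ∀ j ∈ s, j < i → f i < f j}

theorem le_of_mem_strictRecords_of_forall_notMem [LinearOrder ι] [WellFoundedLT ι] [LinearOrder α]
    {f : ι → α} {s : Set ι} {i i' k : ι} (hi : i ∈ strictRecords f s)
    (hgap : ∀ r ∈ Set.Ioo i i', r ∉ strictRecords f s) (hk : k ∈ s) (hki' : k < i') :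
    f i ≤ f k := by
  induction k using WellFoundedLT.induction with
  | ind k ih =>
    rcases lt_trichotomy k i with hlt | rfl | hgt
    · exact (hi.2 k hk hlt).le
    · exact le_rfl
    · by_contra! hfk
      exact hgap k ⟨hgt, hki'⟩
        ⟨hk, fun j hj hjk => hfk.trans_le (ih j hjk hj (hjk.trans hki'))⟩

end Records

theorem ceil_sub_eq_of_sub_le_ceil_sub_ceil {R : Type*} [Ring R] [LinearOrder R]
    [IsStrictOrderedRing R] [FloorRing R] {x y : R} (h : x - y ≤ ⌈x⌉ - ⌈y⌉) :
    ⌈x - y⌉ = ⌈x⌉ - ⌈y⌉ := by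
  rw [Int.ceil_eq_iff]
  push_cast
  refine ⟨?_, h⟩
  calc (⌈x⌉ - ⌈y⌉ - 1 : R) = ⌈x⌉ - 1 - ⌈y⌉ := sub_right_comm _ _ _
    _ < x - ⌈y⌉ := sub_lt_sub_right (sub_lt_iff_lt_add.2 (Int.ceil_lt_add_one x)) _
    _ ≤ x - y := sub_le_sub_left (Int.le_ceil y) x

theorem sub_mul_lt_mul_sub_of_mul_sub_le {R : Type*} [CommRing R] [LinearOrder R]
    [IsStrictOrderedRing R] {p q p' q' k s : R} (hq : 0 < q) (hqq' : q ≤ q') (hk : k < q' - q)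
    (hdet : p' * q < p * q') (hle : p * (q' - k) ≤ (p' + s) * q) :
    (p - p') * k < s * (q' - q) := by
  set D := p * q' - p' * q with hD
  have hD_pos : 0 < D := sub_pos.2 hdet
  have hD_le : D - p * k ≤ q * s := by linarith
  refine lt_of_mul_lt_mul_left ?_ hq.le
  calc q * ((p - p') * k) = D * k - p * (q' - q) * k := by rw [hD]; ring
    _ < D * (q' - q) - p * (q' - q) * k :=
      sub_lt_sub_right (mul_lt_mul_of_pos_left hk hD_pos) _
    _ = (q' - q) * (D - p * k) := by ring
    _ ≤ (q' - q) * (q * s) := mul_le_mul_of_nonneg_left hD_le (sub_nonneg.2 hqq')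
    _ = q * (s * (q' - q)) := by ring

section CeilSlope

variable {K : Type*} [Field K] [LinearOrder K] [FloorRing K]

/-- The smallest slope `a / q` of a lattice point `(q, a)` on or above the line `y = θx`.
For `q = 0` this is the junk value `0`. -/
def ceilSlope (θ : K) (q : ℕ) : K :=
  ⌈q * θ⌉ / q

variable [IsStrictOrderedRing K] {θ : K} {q k : ℕ}

theorem ceilSlope_lt_ceilSlope_iff (hq : 0 < q) (hk : 0 < k) :
    ceilSlope θ q < ceilSlope θ k ↔ ⌈q * θ⌉ * (k : ℤ) < ⌈k * θ⌉ * (q : ℤ) := by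
  rw [ceilSlope, ceilSlope, div_lt_div_iff₀ (Nat.cast_pos.2 hq) (Nat.cast_pos.2 hk)]
  norm_cast

theorem ceilSlope_le_ceilSlope_iff (hq : 0 < q) (hk : 0 < k) :
    ceilSlope θ q ≤ ceilSlope θ k ↔ ⌈q * θ⌉ * (k : ℤ) ≤ ⌈k * θ⌉ * (q : ℤ) := by
  simpa only [not_lt] using (ceilSlope_lt_ceilSlope_iff hk hq).not

end CeilSlope

theorem Sθ_eq_strictRecords (θ : ℝ) : Sθ θ = strictRecords (ceilSlope θ) (Set.Ioi 0) :=
  rfl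

namespace SθConsec

variable {θ : ℝ} {q q' : ℕ}

theorem ceilSlope_le (h : SθConsec θ q q') {k : ℕ} (hk : 0 < k) (hkq' : k < q') :
    ceilSlope θ q ≤ ceilSlope θ k := by
  obtain ⟨hq, -, -, hgap⟩ := h
  simp only [Sθ_eq_strictRecords] at hq hgap
  exact le_of_mem_strictRecords_of_forall_notMem hq (fun r hr hr' => hgap r hr' hr) hk hkq'

theorem ceil_mul_le_mul (h : SθConsec θ q q') {k : ℕ} {a : ℤ} (hk : 0 < k) (hkq' : k < q')
    (ha : k * θ ≤ a) : ⌈q * θ⌉ * (k : ℤ) ≤ a * q :=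
  calc ⌈q * θ⌉ * (k : ℤ) ≤ ⌈k * θ⌉ * q :=
        (ceilSlope_le_ceilSlope_iff h.1.1 hk).1 (h.ceilSlope_le hk hkq')
    _ ≤ a * q := by gcongr; exact Int.ceil_le.2 ha

theorem ceil_mul_lt_ceil_mul (h : SθConsec θ q q') :
    ⌈q' * θ⌉ * (q : ℤ) < ⌈q * θ⌉ * (q' : ℤ) := by
  obtain ⟨hq, hq', hlt, -⟩ := h
  exact (ceilSlope_lt_ceilSlope_iff hq'.1 hq.1).1 (hq'.2 q hq.1 hlt)

theorem ceil_sub_ceil_lt (h : SθConsec θ q q') :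
    (⌈q' * θ⌉ - ⌈q * θ⌉ : ℝ) < q' * θ - q * θ := by
  have hlt : q < q' := h.2.2.1
  by_contra! hle
  have habove : ((q' - q : ℕ) : ℝ) * θ ≤ (⌈q' * θ⌉ - ⌈q * θ⌉ : ℤ) := by
    push_cast [hlt.le]
    linarith
  have hslope := h.ceil_mul_le_mul (Nat.sub_pos_of_lt hlt) (Nat.sub_lt h.2.1.1 h.1.1) habove
  push_cast [hlt.le] at hslope
  linarith [h.ceil_mul_lt_ceil_mul]

theorem ceil_gap_mul_neg (h : SθConsec θ q q') :
    ⌈((q' - q : ℕ) : ℝ) * -θ⌉ = ⌈q * θ⌉ - ⌈q' * θ⌉ := by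
  have hmul : ((q' - q : ℕ) : ℝ) * -θ = q * θ - q' * θ := by
    rw [Nat.cast_sub h.2.2.1.le]
    ring
  rw [hmul]
  exact ceil_sub_eq_of_sub_le_ceil_sub_ceil (by linarith [h.ceil_sub_ceil_lt])

theorem ceil_mul_sub_le (h : SθConsec θ q q') {k : ℕ} (hk : 0 < k) (hkq' : k < q') :
    ⌈q * θ⌉ * ((q' : ℤ) - k) ≤ (⌈q' * θ⌉ + ⌈k * -θ⌉) * q := by
  have habove : ((q' - k : ℕ) : ℝ) * θ ≤ (⌈q' * θ⌉ + ⌈k * -θ⌉ : ℤ) := by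
    push_cast [hkq'.le]
    linarith [Int.le_ceil (q' * θ), Int.le_ceil (k * -θ)]
  simpa only [Nat.cast_sub hkq'.le] using
    h.ceil_mul_le_mul (Nat.sub_pos_of_lt hkq') (Nat.sub_lt h.2.1.1 hk) habove

end SθConsec

theorem Sθ_gap_mem_neg_general {θ : ℝ} {q q' : ℕ} (h : SθConsec θ q q') :
    q' - q ∈ Sθ (-θ) := by
  have hlt : q < q' := h.2.2.1
  have hgap_pos : 0 < q' - q := Nat.sub_pos_of_lt hlt
  refine ⟨hgap_pos, fun k hk hkgap => (ceilSlope_lt_ceilSlope_iff hgap_pos hk).2 ?_⟩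
  rw [h.ceil_gap_mul_neg, Nat.cast_sub hlt.le]
  refine sub_mul_lt_mul_sub_of_mul_sub_le ?_ ?_ ?_ h.ceil_mul_lt_ceil_mul
    (h.ceil_mul_sub_le hk (hkgap.trans_le (Nat.sub_le q' q)))
  · exact_mod_cast h.1.1
  · exact_mod_cast hlt.le
  · omega

/-- For consecutive elements `q < q'` of `S_θ`, the difference `q' - q` lies in `S_{-θ}`. -/
theorem Sθ_gap_mem_neg (θ : ℝ) (hθ : Irrational θ) (q q' : ℕ)
    (h : SθConsec θ q q') : q' - q ∈ Sθ (-θ) :=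
  Sθ_gap_mem_neg_general h
end

section
/- For every irrational real number θ, the gaps between consecutive elements of S_θ tend to infinity: for every natural number n there exists a positive integer Q such that every pair of consecutive elements q < q' of S_θ with q ≥ Q satisfies q' − q ≥ n. -/
/-!
Write `δ q = ⌈qθ⌉ - qθ ∈ [0, 1)`, so that `⌈qθ⌉ / q = θ + δ q / q`. If `r < q` and `δ r ≤ δ q`,
then `δ (q - r) = δ q - δ r`, so `δ q / q` is the mediant of `δ r / r` and `δ (q - r) / (q - r)`
and cannot be smaller than both. Hence an element `q` of `Sθ θ` satisfies `δ q < δ r` for every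
positive `r < q`.

For `q < q + d` in `Sθ θ` this gives `δ (q + d) < δ q`, which forces
`δ q - δ (q + d) = 1 - δ d`. Over all `d < n` these drops are bounded below by a positive
constant, whereas `δ` is decreasing and nonnegative on `Sθ θ`, so its drops are eventually
smaller than any positive constant.
-/

section Fract

variable {R : Type*} [Ring R] [LinearOrder R] [IsOrderedRing R] [FloorRing R] {a b : R}

lemma fract_right_eq_sub_of_fract_le_fract_add (h : Int.fract a ≤ Int.fract (a + b)) :
    Int.fract b = Int.fract (a + b) - Int.fract a := by
  obtain ⟨z, hz⟩ := Int.fract_add a b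
  refine Int.fract_eq_iff.2 ⟨sub_nonneg.2 h, ?_, ⌊b⌋ - z, ?_⟩
  · exact (sub_le_self _ (Int.fract_nonneg a)).trans_lt (Int.fract_lt_one _)
  · rw [Int.cast_sub, ← hz, ← Int.self_sub_fract b]
    abel

lemma fract_right_eq_sub_add_one_of_fract_add_lt_fract (h : Int.fract (a + b) < Int.fract a) :
    Int.fract b = Int.fract (a + b) - Int.fract a + 1 := by
  obtain ⟨z, hz⟩ := Int.fract_add a b
  refine Int.fract_eq_iff.2 ⟨?_, ?_, ⌊b⌋ - z - 1, ?_⟩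
  · rw [sub_add_eq_add_sub, sub_nonneg]
    exact (Int.fract_lt_one a).le.trans (le_add_of_nonneg_left (Int.fract_nonneg _))
  · exact add_lt_of_neg_left 1 (sub_neg.2 h)
  · rw [Int.cast_sub, Int.cast_sub, Int.cast_one, ← hz, ← Int.self_sub_fract b]
    abel

end Fract

lemma exists_mem_forall_sub_lt_of_antitoneOn {α : Type*} [Preorder α] {f : α → ℝ} {s : Set α}
    (hf : AntitoneOn f s) (hbdd : BddBelow (f '' s)) (hs : s.Nonempty) {ε : ℝ} (hε : 0 < ε) :
    ∃ a ∈ s, ∀ x ∈ s, ∀ y ∈ s, a ≤ x → f x - f y < ε := by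
  obtain ⟨_, ⟨a, ha, rfl⟩, hlt⟩ := Real.lt_sInf_add_pos (hs.image f) hε
  refine ⟨a, ha, fun x hx y hy hax => ?_⟩
  have hxa : f x ≤ f a := hf ha hx hax
  have hy_inf : sInf (f '' s) ≤ f y := csInf_le hbdd (Set.mem_image_of_mem f hy)
  linarith

/-- The excess `⌈qθ⌉ - qθ` of the least integer `≥ qθ`, which controls membership in `Sθ θ`.
It is encoded as the fractional part of `-qθ`, so that the theory of `Int.fract` applies. -/
noncomputable def overshoot (θ : ℝ) (q : ℕ) : ℝ :=
  Int.fract (-(q * θ))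

section Overshoot

variable {θ : ℝ} {q r d : ℕ}

lemma overshoot_nonneg (θ : ℝ) (q : ℕ) : 0 ≤ overshoot θ q :=
  Int.fract_nonneg _

lemma overshoot_lt_one (θ : ℝ) (q : ℕ) : overshoot θ q < 1 :=
  Int.fract_lt_one _

lemma ceil_natCast_mul_eq_add_overshoot (θ : ℝ) (q : ℕ) :
    (⌈(q : ℝ) * θ⌉ : ℝ) = q * θ + overshoot θ q := by
  rw [overshoot, Int.fract, Int.floor_neg, Int.cast_neg]
  ring

lemma neg_natCast_add_mul (θ : ℝ) (r d : ℕ) :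
    -(((r + d : ℕ) : ℝ) * θ) = -(r * θ) + -(d * θ) := by
  push_cast
  ring

lemma overshoot_right_eq_sub_of_le (h : overshoot θ r ≤ overshoot θ (r + d)) :
    overshoot θ d = overshoot θ (r + d) - overshoot θ r := by
  simp only [overshoot, neg_natCast_add_mul] at h ⊢
  exact fract_right_eq_sub_of_fract_le_fract_add h

lemma overshoot_right_eq_sub_add_one_of_lt (h : overshoot θ (r + d) < overshoot θ r) :
    overshoot θ d = overshoot θ (r + d) - overshoot θ r + 1 := by
  simp only [overshoot, neg_natCast_add_mul] at h ⊢
  exact fract_right_eq_sub_add_one_of_fract_add_lt_fract h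

lemma exists_pos_forall_lt_one_sub_overshoot (θ : ℝ) (n : ℕ) :
    ∃ ε > 0, ∀ d < n, ε < 1 - overshoot θ d := by
  simpa [overshoot_lt_one] using
    Order.exists_between_finsets (lo := {0})
      (hi := (Finset.range n).image fun d => 1 - overshoot θ d)

lemma one_mem_Sθ (θ : ℝ) : 1 ∈ Sθ θ :=
  ⟨one_pos, fun _ hr hr1 => absurd hr1 (Nat.not_lt.2 hr)⟩

lemma overshoot_mul_lt_of_mem_Sθ (hq : q ∈ Sθ θ) (hr : 0 < r) (hrq : r < q) :
    overshoot θ q * r < overshoot θ r * q := by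
  have hslope := hq.2 r hr hrq
  rw [div_lt_div_iff₀ (Nat.cast_pos.2 hq.1) (Nat.cast_pos.2 hr),
    ceil_natCast_mul_eq_add_overshoot, ceil_natCast_mul_eq_add_overshoot] at hslope
  linarith

lemma overshoot_lt_of_mem_Sθ (hq : q ∈ Sθ θ) (hr : 0 < r) (hrq : r < q) :
    overshoot θ q < overshoot θ r := by
  by_contra! hle
  obtain ⟨d, rfl⟩ := Nat.exists_eq_add_of_le hrq.le
  have hr_slope := overshoot_mul_lt_of_mem_Sθ hq hr hrq
  have hd_slope := overshoot_mul_lt_of_mem_Sθ hq (Nat.pos_of_lt_add_right hrq)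
    (Nat.lt_add_of_pos_left hr)
  rw [overshoot_right_eq_sub_of_le hle] at hd_slope
  push_cast at hr_slope hd_slope
  linarith

lemma overshoot_strictAntiOn (θ : ℝ) : StrictAntiOn (overshoot θ) (Sθ θ) :=
  fun _ hq _ hq' hlt => overshoot_lt_of_mem_Sθ hq' hq.1 hlt

lemma overshoot_sub_overshoot_add_of_mem_Sθ (hqd : q + d ∈ Sθ θ) (hq : 0 < q) (hd : 0 < d) :
    overshoot θ q - overshoot θ (q + d) = 1 - overshoot θ d := by
  have hlt := overshoot_lt_of_mem_Sθ hqd hq (Nat.lt_add_of_pos_right hd)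
  rw [overshoot_right_eq_sub_add_one_of_lt hlt]
  ring

end Overshoot

theorem Sθ_gaps_tendsto_infinity_general (θ : ℝ) (n : ℕ) :
    ∃ Q : ℕ, 0 < Q ∧ ∀ q ∈ Sθ θ, ∀ q' ∈ Sθ θ, q < q' → Q ≤ q → n ≤ q' - q := by
  obtain ⟨ε, hε, hdrop⟩ := exists_pos_forall_lt_one_sub_overshoot θ n
  have hbdd : BddBelow (overshoot θ '' Sθ θ) :=
    ⟨0, Set.forall_mem_image.2 fun q _ => overshoot_nonneg θ q⟩
  obtain ⟨Q, hQ, hsmall⟩ := exists_mem_forall_sub_lt_of_antitoneOn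
    (overshoot_strictAntiOn θ).antitoneOn hbdd ⟨1, one_mem_Sθ θ⟩ hε
  refine ⟨Q, hQ.1, fun q hq q' hq' hlt hQq => ?_⟩
  by_contra! hgap
  obtain ⟨d, rfl⟩ := Nat.exists_eq_add_of_le hlt.le
  have hdrop_eq : overshoot θ q - overshoot θ (q + d) = 1 - overshoot θ d :=
    overshoot_sub_overshoot_add_of_mem_Sθ hq' hq.1 (Nat.pos_of_lt_add_right hlt)
  have hdrop_gt : ε < 1 - overshoot θ d := hdrop d (by rwa [Nat.add_sub_cancel_left] at hgap)
  exact (hdrop_gt.trans_eq hdrop_eq.symm).not_gt (hsmall q hq _ hq' hQq)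

/-- The gaps between consecutive elements of `S_θ` tend to infinity. -/
theorem Sθ_gaps_tendsto_infinity (θ : ℝ) (hθ : Irrational θ) :
    ∀ n : ℕ, ∃ Q : ℕ, 0 < Q ∧
      ∀ q q' : ℕ, SθConsec θ q q' → Q ≤ q → n ≤ q' - q :=
  fun n =>
    let ⟨Q, hQ, hgap⟩ := Sθ_gaps_tendsto_infinity_general θ n
    ⟨Q, hQ, fun q q' ⟨hq, hq', hlt, _⟩ => hgap q hq q' hq' hlt⟩
end

section
/- For every irrational real number θ and every pair of consecutive elements q < q' of S_θ with q > 1, one has q' − q ≠ q; equivalently, q' ≠ 2q. -/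
/-!
Let `q < q'` be consecutive in `Sθ θ`, `p = ⌈qθ⌉`, `p' = ⌈q'θ⌉` and `D = p * q' - p' * q > 0`.
Since `p / q` is in lowest terms, there are lattice points `(r, a)` with `p * r - a * q = 1`, and
one of them is `(k / D) • (q, p) + (1 / D) • (q', p')` with `0 ≤ k < D`. It lies on or above the
line of slope `θ` and `a / r < p / q`, while `r < q'` as soon as `D > 1`; but `q'` is the first
denominator that improves on `p / q`. Hence `D = 1`, so `q` and `q'` are coprime.
-/

/-- The least fraction with denominator `q` that is at least `θ`, so that `Sθ θ` consists of the
positive integers at which `ceilRatio θ` attains a strict record minimum.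
Junk value: `ceilRatio θ 0 = 0`. -/
noncomputable def ceilRatio (θ : ℝ) (q : ℕ) : ℝ :=
  ⌈(q : ℝ) * θ⌉ / (q : ℝ)

theorem exists_det_eq_one_and_cone_coords {p q p' q' : ℤ} (hpq : IsCoprime p q)
    (hdet : 0 < p * q' - p' * q) :
    ∃ r a k : ℤ, p * r - a * q = 1 ∧ 0 ≤ k ∧ k < p * q' - p' * q ∧
      (p * q' - p' * q) * r = k * q + q' ∧ (p * q' - p' * q) * a = k * p + p' := by
  obtain ⟨u, v, huv⟩ := hpq
  set D := p * q' - p' * q with hD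
  -- `(u, -v)` has determinant `1` against `(q, p)`; adding `(q, p)` moves its other coordinate by
  -- `D`, so that coordinate can be reduced modulo `D`.
  set k₀ := -v * q' - p' * u with hk₀
  have hdiv : D * (k₀ / D) + k₀ % D = k₀ := Int.mul_ediv_add_emod k₀ D
  refine ⟨u - q * (k₀ / D), -v - p * (k₀ / D), k₀ % D, ?_, Int.emod_nonneg _ hdet.ne',
    Int.emod_lt_of_pos _ hdet, ?_, ?_⟩
  · linear_combination huv
  · linear_combination q' * huv - q * hdiv + u * hD - q * hk₀
  · linear_combination p' * huv - p * hdiv - v * hD - p * hk₀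

section Consecutive

variable {θ : ℝ} {q q' r : ℕ}

theorem ceilRatio_le_div {a : ℤ} (h : (r : ℝ) * θ ≤ a) : ceilRatio θ r ≤ a / r :=
  div_le_div_of_nonneg_right (Int.cast_le.2 (Int.ceil_le.2 h)) r.cast_nonneg

theorem isCoprime_ceil_of_mem_Sθ (hq : q ∈ Sθ θ) : IsCoprime ⌈(q : ℝ) * θ⌉ (q : ℤ) := by
  obtain ⟨hq0, hrecord⟩ := hq
  obtain ⟨g, hg⟩ : ∃ g, g = Int.gcd ⌈(q : ℝ) * θ⌉ q := ⟨_, rfl⟩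
  obtain ⟨a, ha⟩ : (g : ℤ) ∣ ⌈(q : ℝ) * θ⌉ := hg ▸ Int.gcd_dvd_left _ _
  obtain ⟨b, rfl⟩ : g ∣ q := Int.natCast_dvd_natCast.1 (hg ▸ Int.gcd_dvd_right _ _)
  have hg0 : 0 < g := Nat.pos_of_mul_pos_right hq0
  have hb0 : 0 < b := Nat.pos_of_mul_pos_left hq0
  rw [Int.isCoprime_iff_gcd_eq_one, ← hg]
  by_contra hg1
  have hgR : (0 : ℝ) < g := Nat.cast_pos.2 hg0
  have hba : (b : ℝ) * θ ≤ a := by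
    have hle := Int.le_ceil (((g * b : ℕ) : ℝ) * θ)
    rw [ha] at hle
    push_cast at hle
    exact le_of_mul_le_mul_left (by linarith) hgR
  have hreduced : ceilRatio θ (g * b) = a / b := by
    rw [ceilRatio, ha]
    push_cast
    exact mul_div_mul_left _ _ hgR.ne'
  have hlt : ceilRatio θ (g * b) < ceilRatio θ b :=
    hrecord b hb0 (lt_mul_of_one_lt_left hb0 (by omega))
  exact (hlt.trans_le (ceilRatio_le_div hba)).ne hreduced

theorem exists_mem_Sθ_ceilRatio_le (θ : ℝ) (hr : 0 < r) :
    ∃ s ∈ Sθ θ, s ≤ r ∧ ceilRatio θ s ≤ ceilRatio θ r := by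
  induction r using Nat.strong_induction_on with
  | _ r ih =>
    by_cases hmem : r ∈ Sθ θ
    · exact ⟨r, hmem, le_rfl, le_rfl⟩
    · obtain ⟨t, ht0, htr, hle⟩ : ∃ t, 0 < t ∧ t < r ∧ ceilRatio θ t ≤ ceilRatio θ r := by
        by_contra! hrecord
        exact hmem ⟨hr, hrecord⟩
      obtain ⟨s, hs, hst, hsle⟩ := ih t htr ht0
      exact ⟨s, hs, hst.trans htr.le, hsle.trans hle⟩

namespace SθConsec

theorem le_of_ceilRatio_lt (h : SθConsec θ q q') (hr : 0 < r)
    (hlt : ceilRatio θ r < ceilRatio θ q) : q' ≤ r := by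
  obtain ⟨hq, -, -, hgap⟩ := h
  obtain ⟨s, hs, hsr, hsle⟩ := exists_mem_Sθ_ceilRatio_le θ hr
  have hsq : ceilRatio θ s < ceilRatio θ q := hsle.trans_lt hlt
  have hqs : q < s := by
    rcases lt_trichotomy s q with hslt | rfl | hqlt
    · exact absurd (hq.2 s hs.1 hslt) hsq.not_gt
    · exact absurd hsq (lt_irrefl _)
    · exact hqlt
  exact (not_lt.1 fun hsq' => hgap s hs ⟨hqs, hsq'⟩).trans hsr

theorem le_of_mul_lt_ceil_mul {a : ℤ} (h : SθConsec θ q q') (hr : 0 < r) (ha : (r : ℝ) * θ ≤ a)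
    (hlt : a * q < ⌈(q : ℝ) * θ⌉ * r) : q' ≤ r := by
  refine h.le_of_ceilRatio_lt hr ((ceilRatio_le_div ha).trans_lt ?_)
  rw [ceilRatio, div_lt_div_iff₀ (Nat.cast_pos.2 hr) (Nat.cast_pos.2 h.1.1)]
  exact_mod_cast hlt

theorem det_pos (h : SθConsec θ q q') :
    0 < ⌈(q : ℝ) * θ⌉ * (q' : ℤ) - ⌈(q' : ℝ) * θ⌉ * (q : ℤ) := by
  obtain ⟨hq, hq', hqq', -⟩ := h
  have hlt := hq'.2 q hq.1 hqq'
  rw [div_lt_div_iff₀ (Nat.cast_pos.2 hq'.1) (Nat.cast_pos.2 hq.1)] at hlt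
  exact sub_pos.2 (mod_cast hlt)

theorem det_eq_one (h : SθConsec θ q q') :
    ⌈(q : ℝ) * θ⌉ * (q' : ℤ) - ⌈(q' : ℝ) * θ⌉ * (q : ℤ) = 1 := by
  have hq'0 : 0 < q' := h.2.1.1
  have hqq' : q < q' := h.2.2.1
  have hD := h.det_pos
  obtain ⟨r, a, k, hra, hk0, hkD, hr, ha⟩ :=
    exists_det_eq_one_and_cone_coords (isCoprime_ceil_of_mem_Sθ h.1) hD
  have hqθ := Int.le_ceil ((q : ℝ) * θ)
  have hq'θ := Int.le_ceil ((q' : ℝ) * θ)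
  set p := ⌈(q : ℝ) * θ⌉
  set D := p * (q' : ℤ) - ⌈(q' : ℝ) * θ⌉ * (q : ℤ)
  by_contra hD1
  have hr0 : 0 < r := pos_of_mul_pos_right (by rw [hr]; positivity) hD.le
  have hrq' : r < q' := by
    refine lt_of_mul_lt_mul_left ?_ hD.le
    calc D * r = k * q + q' := hr
      _ ≤ (D - 1) * q + q' := by gcongr; omega
      _ < (D - 1) * q' + q' := by gcongr; omega
      _ = D * q' := by ring
  lift r to ℕ using hr0.le
  have hrθ : (r : ℝ) * θ ≤ a := by
    refine le_of_mul_le_mul_left ?_ (Int.cast_pos.2 hD : (0 : ℝ) < D)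
    have hrR : (D : ℝ) * r = k * q + q' := mod_cast hr
    have haR : (D : ℝ) * a = k * p + ⌈(q' : ℝ) * θ⌉ := mod_cast ha
    calc (D : ℝ) * (r * θ) = k * (q * θ) + q' * θ := by linear_combination θ * hrR
      _ ≤ k * p + ⌈(q' : ℝ) * θ⌉ := by gcongr
      _ = D * a := haR.symm
  have hlt : a * q < p * r := by omega
  have hq'r : q' ≤ r := h.le_of_mul_lt_ceil_mul (mod_cast hr0) hrθ hlt
  omega

theorem coprime (h : SθConsec θ q q') : q.Coprime q' :=
  Nat.isCoprime_iff_coprime.1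
    ⟨-⌈(q' : ℝ) * θ⌉, ⌈(q : ℝ) * θ⌉, by linear_combination h.det_eq_one⟩

end SθConsec

theorem Sθ_gap_ne_self_general (h : SθConsec θ q q') (hq : 1 < q) : ¬q ∣ q' :=
  fun hdvd => hq.ne' (h.coprime.eq_one_of_dvd hdvd)

end Consecutive

/-- For consecutive elements `q < q'` of `S_θ` with `q > 1`, one has
`q' - q ≠ q`; equivalently, `q' ≠ 2q`. -/
theorem Sθ_gap_ne_self (θ : ℝ) (hθ : Irrational θ) (q q' : ℕ)
    (h : SθConsec θ q q') (hq : 1 < q) : q' - q ≠ q ∧ q' ≠ 2 * q :=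
  have hndvd : ¬q ∣ q' := Sθ_gap_ne_self_general h hq
  ⟨fun hgap => hndvd ⟨2, by omega⟩, fun hdouble => hndvd ⟨2, by omega⟩⟩
end

section
/- For every irrational real number θ, every pair of consecutive elements p < p' of S_{−θ}, and every integer N with p ≤ N < p', one has ⌊Nθ⌋ − ⌊(N − p)θ⌋ = ⌊pθ⌋. -/
/-!
Since `⌈-qθ⌉ / q = fract (qθ) / q - θ`, the elements of `S_{-θ}` are the indices at which
`fract (qθ) / q` reaches a new strict minimum. These are also the record minima of `fract (qθ)`
itself: if `fract (rθ) ≤ fract (qθ)` with `r < q`, then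
`fract (qθ) = fract (rθ) + fract ((q - r)θ)`, so `fract (qθ) / q` is a weighted mean of the values
of the quotient at `r` and `q - r`, and cannot lie below both. Hence `fract (pθ) ≤ fract (Nθ)` for
the last element `p` of `S_{-θ}` up to `N`, and no borrow occurs when `pθ` is subtracted from `Nθ`.
-/

open Set

/-- The positive integers `q` at which `f` takes a value strictly below all of `f 1, …, f (q - 1)`.
The value `f 0` is ignored, so that `Sθ θ` is the set of record minima of `q ↦ ⌈qθ⌉ / q`. -/
def recordMinima {α : Type*} [LT α] (f : ℕ → α) : Set ℕ :=
  {q | 0 < q ∧ ∀ r, 0 < r → r < q → f q < f r}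

theorem apply_le_of_isGreatest_recordMinima {α : Type*} [LinearOrder α] {f : ℕ → α} {p N n : ℕ}
    (hp : IsGreatest (recordMinima f ∩ Iic N) p) (hn : 0 < n) (hnN : n ≤ N) : f p ≤ f n := by
  induction n using Nat.strong_induction_on with
  | _ n ih =>
    by_cases hrec : n ∈ recordMinima f
    · obtain rfl | hlt := (hp.2 ⟨hrec, hnN⟩).eq_or_lt
      · exact le_rfl
      · exact (hp.1.1.2 n hn hlt).le
    · obtain ⟨r, hr, hrn, hle⟩ : ∃ r, 0 < r ∧ r < n ∧ f r ≤ f n := by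
        simpa [recordMinima, hn] using hrec
      exact (ih r hrn hr (hrn.le.trans hnN)).trans hle

section Fract

variable {R : Type*} [Ring R] [LinearOrder R] [IsOrderedRing R] [FloorRing R] {a b : R}

theorem floor_sub_of_fract_le (h : Int.fract b ≤ Int.fract a) : ⌊a - b⌋ = ⌊a⌋ - ⌊b⌋ := by
  have hsplit : a - b = Int.fract a - Int.fract b + (⌊a⌋ - ⌊b⌋ : ℤ) := by
    simp only [Int.fract, Int.cast_sub]
    abel
  have hzero : ⌊Int.fract a - Int.fract b⌋ = 0 :=
    Int.floor_eq_zero_iff.2 ⟨sub_nonneg.2 h,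
      (sub_le_self _ (Int.fract_nonneg b)).trans_lt (Int.fract_lt_one a)⟩
  rw [hsplit, Int.floor_add_intCast, hzero, zero_add]

theorem fract_sub_of_fract_le (h : Int.fract b ≤ Int.fract a) :
    Int.fract (a - b) = Int.fract a - Int.fract b := by
  simp only [Int.fract, floor_sub_of_fract_le h, Int.cast_sub]
  abel

end Fract

section Field

variable {K : Type*} [Field K] [LinearOrder K] [IsStrictOrderedRing K] [FloorRing K]

theorem recordMinima_fract_mul_div_eq (θ : K) :
    recordMinima (fun q ↦ Int.fract (q * θ) / q) = recordMinima fun q ↦ Int.fract (q * θ) := by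
  ext q
  refine and_congr_right fun hq ↦ ⟨fun hrec r hr hrq ↦ ?_, fun hrec r hr hrq ↦ ?_⟩
  · by_contra! hle
    have hsub : Int.fract (((q - r : ℕ) : K) * θ) = Int.fract (q * θ) - Int.fract (r * θ) := by
      rw [Nat.cast_sub hrq.le, sub_mul, fract_sub_of_fract_le hle]
    have hr_lt := hrec r hr hrq
    have hsub_lt := hrec (q - r) (by lia) (by lia)
    rw [div_lt_div_iff₀ (by positivity) (by positivity)] at hr_lt
    rw [div_lt_div_iff₀ (by positivity) (by simpa using hrq), hsub, Nat.cast_sub hrq.le] at hsub_lt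
    linarith
  · calc Int.fract (q * θ) / q < Int.fract (r * θ) / q :=
          div_lt_div_of_pos_right (hrec r hr hrq) (by positivity)
      _ ≤ Int.fract (r * θ) / r :=
          div_le_div_of_nonneg_left (Int.fract_nonneg _) (by positivity) (by gcongr)

theorem ceil_mul_neg_div {x : K} (hx : x ≠ 0) (θ : K) :
    (⌈x * -θ⌉ : K) / x = Int.fract (x * θ) / x - θ := by
  rw [mul_neg, Int.ceil_neg, Int.fract]
  push_cast
  field_simp
  ring

end Field

theorem Sθ_neg_eq_recordMinima_fract (θ : ℝ) :
    Sθ (-θ) = recordMinima fun q ↦ Int.fract (q * θ) := by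
  rw [← recordMinima_fract_mul_div_eq]
  ext q
  refine and_congr_right fun hq ↦ forall₃_congr fun r hr _ ↦ ?_
  rw [ceil_mul_neg_div (by positivity), ceil_mul_neg_div (by positivity), sub_lt_sub_iff_right]

theorem SθConsec.isGreatest_inter_Iic {θ : ℝ} {p p' N : ℕ} (h : SθConsec θ p p') (hpN : p ≤ N)
    (hNp' : N < p') : IsGreatest (Sθ θ ∩ Iic N) p :=
  ⟨⟨h.1, hpN⟩, fun r hr ↦ not_lt.1 fun hpr ↦ h.2.2.2 r hr.1 ⟨hpr, hr.2.trans_lt hNp'⟩⟩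

theorem floor_diff_of_consec_neg_general (θ : ℝ) {p N : ℕ}
    (hp : IsGreatest (Sθ (-θ) ∩ Iic N) p) :
    ⌊N * θ⌋ - ⌊(N - p : ℝ) * θ⌋ = ⌊p * θ⌋ := by
  obtain ⟨⟨hp_pos, -⟩, hpN⟩ := hp.1
  rw [Sθ_neg_eq_recordMinima_fract] at hp
  have hfract : Int.fract (p * θ) ≤ Int.fract (N * θ) :=
    apply_le_of_isGreatest_recordMinima hp (hp_pos.trans_le hpN) le_rfl
  rw [sub_mul, floor_sub_of_fract_le hfract, sub_sub_cancel]

/-- For consecutive elements `p < p'` of `S_{-θ}` and any integer `p ≤ N < p'`,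
`⌊Nθ⌋ - ⌊(N - p)θ⌋ = ⌊pθ⌋`. -/
theorem floor_diff_of_consec_neg (θ : ℝ) (hθ : Irrational θ) (p p' : ℕ)
    (h : SθConsec (-θ) p p') (N : ℤ) (hN1 : (p : ℤ) ≤ N) (hN2 : N < (p' : ℤ)) :
    ⌊(N : ℝ) * θ⌋ - ⌊((N : ℝ) - (p : ℝ)) * θ⌋ = ⌊(p : ℝ) * θ⌋ := by
  lift N to ℕ using by lia
  exact floor_diff_of_consec_neg_general θ (h.isGreatest_inter_Iic (mod_cast hN1) (mod_cast hN2))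
end

section
/- For every irrational real number θ and every pair of consecutive elements p < p' of S_{−θ}, one has ⌊p'θ⌋ − ⌊(p' − p)θ⌋ = ⌊pθ⌋ + 1. -/
/-! Replacing `-θ` by `θ` turns ceilings into floors: `q ∈ S_{-θ}` says that `⌊qθ⌋ / q` exceeds
every earlier `⌊q'θ⌋ / q'`. Split such a `q` as `p + d`. If `⌊qθ⌋` were at most `⌊pθ⌋ + ⌊dθ⌋`, then
`⌊qθ⌋ / q` would be at most the mediant of `⌊pθ⌋ / p` and `⌊dθ⌋ / d`, hence at most the larger of
these two earlier ratios. So `⌊qθ⌋` exceeds `⌊pθ⌋ + ⌊dθ⌋`, and it can do so only by `1`. -/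

theorem add_div_add_le_max {K : Type*} [Field K] [LinearOrder K] [IsStrictOrderedRing K]
    {b d : K} (a c : K) (hb : 0 < b) (hd : 0 < d) :
    (a + c) / (b + d) ≤ max (a / b) (c / d) := by
  have ha : a ≤ max (a / b) (c / d) * b := (div_le_iff₀ hb).mp (le_max_left _ _)
  have hc : c ≤ max (a / b) (c / d) * d := (div_le_iff₀ hd).mp (le_max_right _ _)
  rw [div_le_iff₀ (add_pos hb hd), mul_add]
  exact add_le_add ha hc

theorem mem_Sθ_neg_iff {θ : ℝ} {q : ℕ} :
    q ∈ Sθ (-θ) ↔ 0 < q ∧ ∀ q' : ℕ, 0 < q' → q' < q →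
      (⌊(q' : ℝ) * θ⌋ : ℝ) / (q' : ℝ) < (⌊(q : ℝ) * θ⌋ : ℝ) / (q : ℝ) := by
  simp only [Sθ, Set.mem_ofPred_eq, mul_neg, Int.ceil_neg, Int.cast_neg, neg_div, neg_lt_neg_iff]

theorem floor_add_floor_lt_of_add_mem_Sθ_neg {θ : ℝ} {p d : ℕ} (hp : 0 < p) (hd : 0 < d)
    (h : p + d ∈ Sθ (-θ)) :
    ⌊(p : ℝ) * θ⌋ + ⌊(d : ℝ) * θ⌋ < ⌊((p + d : ℕ) : ℝ) * θ⌋ := by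
  obtain ⟨-, ratio_lt⟩ := mem_Sθ_neg_iff.mp h
  by_contra! hle
  have ratio_le_max : (⌊((p + d : ℕ) : ℝ) * θ⌋ : ℝ) / ((p + d : ℕ) : ℝ) ≤
      max ((⌊(p : ℝ) * θ⌋ : ℝ) / p) ((⌊(d : ℝ) * θ⌋ : ℝ) / d) :=
    calc (⌊((p + d : ℕ) : ℝ) * θ⌋ : ℝ) / ((p + d : ℕ) : ℝ)
        ≤ ((⌊(p : ℝ) * θ⌋ : ℝ) + ⌊(d : ℝ) * θ⌋) / ((p : ℝ) + d) := by
          rw [← Nat.cast_add]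
          gcongr
          exact_mod_cast hle
      _ ≤ max ((⌊(p : ℝ) * θ⌋ : ℝ) / p) ((⌊(d : ℝ) * θ⌋ : ℝ) / d) :=
          add_div_add_le_max _ _ (Nat.cast_pos.mpr hp) (Nat.cast_pos.mpr hd)
  have max_lt_ratio : max ((⌊(p : ℝ) * θ⌋ : ℝ) / p) ((⌊(d : ℝ) * θ⌋ : ℝ) / d) <
      (⌊((p + d : ℕ) : ℝ) * θ⌋ : ℝ) / ((p + d : ℕ) : ℝ) :=
    max_lt (ratio_lt p hp (Nat.lt_add_of_pos_right hd)) (ratio_lt d hd (Nat.lt_add_of_pos_left hp))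
  exact ratio_le_max.not_gt max_lt_ratio

theorem floor_diff_at_succ_of_consec_neg_general {θ : ℝ} {p p' : ℕ} (hp : 0 < p) (hlt : p < p')
    (hp' : p' ∈ Sθ (-θ)) :
    ⌊(p' : ℝ) * θ⌋ - ⌊((p' : ℝ) - (p : ℝ)) * θ⌋ = ⌊(p : ℝ) * θ⌋ + 1 := by
  obtain ⟨d, hd, rfl⟩ := exists_pos_add_of_lt' hlt
  have lower := floor_add_floor_lt_of_add_mem_Sθ_neg hp hd hp'
  have upper := Int.le_floor_add_floor ((p : ℝ) * θ) ((d : ℝ) * θ)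
  rw [← add_mul, ← Nat.cast_add] at upper
  rw [Nat.cast_add, add_sub_cancel_left, ← Nat.cast_add]
  lia

/-- For consecutive elements `p < p'` of `S_{-θ}`,
`⌊p'θ⌋ - ⌊(p' - p)θ⌋ = ⌊pθ⌋ + 1`. -/
theorem floor_diff_at_succ_of_consec_neg (θ : ℝ) (hθ : Irrational θ) (p p' : ℕ)
    (h : SθConsec (-θ) p p') :
    ⌊(p' : ℝ) * θ⌋ - ⌊((p' : ℝ) - (p : ℝ)) * θ⌋ = ⌊(p : ℝ) * θ⌋ + 1 :=
  floor_diff_at_succ_of_consec_neg_general h.1.1 h.2.2.1 h.2.1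
end
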